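/- arXiv:1106.3760 — 5 statements merged into one kernel-verified Lean document; each statement's English description precedes it below -/
import Mathlib

section
/- Let X be a finite group and Q a normal subgroup of X with C_X(Q) ≤ Q. Then every prime dividing the order of the subgroup C_{Aut(X)}(Q) of Aut(X) divides |Z(Q)|. Equivalently, if p is a prime not dividing |Z(Q)| and α is an automorphism of X of p-power order that fixes Q pointwise, then α is the identity. -/
theorem aut_fix_pow_card {X : Type*} [Group X] [Finite X]
    (Q : Subgroup X) (hQ : Q.Normal)
    (hC : Subgroup.centralizer (Q : Set X) ≤ Q) (α : MulAut X)
    (hα : ∀ q ∈ Q, α q = q) : α ^ Nat.card (Subgroup.center Q) = 1 := by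
  ext x
  have hz : x⁻¹ * α x ∈ Subgroup.centralizer (Q : Set X) := by
    rw [Subgroup.mem_centralizer_iff]
    intro q hq
    have h := hα _ (hQ.conj_mem q hq x)
    rw [map_mul, map_mul, map_inv, hα q hq] at h
    have h2 : α x * q = x * q * x⁻¹ * α x := by rw [← h]; group
    rw [mul_assoc x⁻¹, h2]; group
  have hzQ := hC hz
  have hk : ∀ k : ℕ, (α ^ k) x = x * (x⁻¹ * α x) ^ k := by
    intro k
    induction k with
    | zero => simp
    | succ k ih =>
      rw [pow_succ', MulAut.mul_apply, ih, map_mul, map_pow, hα _ hzQ, pow_succ', ← mul_assoc,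
        mul_inv_cancel_left]
  have hc : (⟨x⁻¹ * α x, hzQ⟩ : Q) ∈ Subgroup.center Q := by
    rw [Subgroup.mem_center_iff]
    intro g
    exact Subtype.ext ((Subgroup.mem_centralizer_iff.1 hz) g g.2)
  have h1 : (⟨⟨x⁻¹ * α x, hzQ⟩, hc⟩ : Subgroup.center Q) ^ Nat.card (Subgroup.center Q) = 1 :=
    pow_card_eq_one'
  have h2 : (x⁻¹ * α x) ^ Nat.card (Subgroup.center Q) = 1 :=
    congrArg (fun z : Subgroup.center Q => ((z : Q) : X)) h1
  rw [hk, h2, mul_one, MulAut.one_apply]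

/-- The subgroup of automorphisms fixing `Q` pointwise. -/
def autFix {X : Type*} [Group X] (Q : Subgroup X) : Subgroup (MulAut X) where
  carrier := {α | ∀ q ∈ Q, α q = q}
  one_mem' := fun _ _ => rfl
  mul_mem' := fun {a b} ha hb q hq => by rw [MulAut.mul_apply, hb q hq, ha q hq]
  inv_mem' := fun {a} ha q hq => by
    have h : a⁻¹ (a q) = q := MulAut.inv_apply_self _ a q
    rwa [ha q hq] at h

/-- Lemma 2.1(a): Let `X` be a finite group and `Q` a normal subgroup with `C_X(Q) ≤ Q`
(i.e. `F*(X) = Q`). Then every prime dividing the order of `C_{Aut(X)}(Q)` divides `|Z(Q)|`;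
equivalently, any automorphism of `p`-power order (for a prime `p` not dividing `|Z(Q)|`)
fixing `Q` pointwise is the identity. -/
theorem aut_centralizing_fitting_primes {X : Type*} [Group X] [Finite X]
    (Q : Subgroup X) (hQ : Q.Normal)
    (hC : Subgroup.centralizer (Q : Set X) ≤ Q) :
    (∀ p : ℕ, p.Prime →
      p ∣ Nat.card {α : MulAut X // ∀ q ∈ Q, α q = q} →
      p ∣ Nat.card (Subgroup.center Q)) ∧
    (∀ p : ℕ, p.Prime → ¬ p ∣ Nat.card (Subgroup.center Q) →
      ∀ α : MulAut X, (∃ n : ℕ, orderOf α = p ^ n) →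
        (∀ q ∈ Q, α q = q) → α = 1) := by

  constructor
  · intro p hp hd
    haveI : Fact p.Prime := ⟨hp⟩
    haveI : Finite (MulAut X) := Finite.of_injective (fun a : MulAut X => (a : X → X))
      DFunLike.coe_injective
    have hd' : p ∣ Nat.card (autFix Q) := hd
    obtain ⟨a, ha⟩ := exists_prime_orderOf_dvd_card' p hd'
    rw [← ha, ← Subgroup.orderOf_coe]
    exact orderOf_dvd_of_pow_eq_one (aut_fix_pow_card Q hQ hC a a.2)
  · rintro p hp hnd α ⟨n, hn⟩ hα
    have h := orderOf_dvd_of_pow_eq_one (aut_fix_pow_card Q hQ hC α hα)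
    rw [hn] at h
    rcases Nat.eq_zero_or_pos n with rfl | hpos
    · exact orderOf_eq_one_iff.1 (by simpa using hn)
    · exact absurd ((dvd_pow_self p hpos.ne').trans h) hnd
end

section
/- Let X be a finite group, p a prime, Q a normal p-subgroup of X with C_X(Q) ≤ Q, and P a Sylow p-subgroup of X. Then an automorphism α of X fixes P pointwise if and only if α = conj(z) for some z ∈ Z(P). In particular C_{Aut(X)}(P) = {conj(z) : z ∈ Z(P)}. -/
/-- Lemma 2.1(b): Let `X` be a finite group, `p` a prime, `Q` a normal `p`-subgroup of `X`
with `C_X(Q) ≤ Q` (i.e. `F*(X)` is a `p`-group), and `P` a Sylow `p`-subgroup of `X`.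
Then an automorphism `α` of `X` fixes `P` pointwise if and only if `α` is conjugation by
some element of `Z(P)`; that is, `C_{Aut(X)}(P) = Aut_{Z(P)}(X)`. -/
theorem aut_centralizing_sylow_of_pgroup_fitting {X : Type*} [Group X] [Finite X]
    {p : ℕ} [Fact p.Prime] (Q : Subgroup X) (hQ : Q.Normal) (hQp : IsPGroup p Q)
    (hC : Subgroup.centralizer (Q : Set X) ≤ Q) (P : Sylow p X) (α : MulAut X) :
    (∀ x ∈ (P : Subgroup X), α x = x) ↔
      ∃ z ∈ (P : Subgroup X) ⊓ Subgroup.centralizer ((P : Subgroup X) : Set X),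
        α = MulAut.conj z := by
  constructor
  swap
  · rintro ⟨z, hz, rfl⟩ x hx
    have h := Subgroup.mem_centralizer_iff.1 hz.2 x hx
    rw [MulAut.conj_apply, ← h, mul_inv_cancel_right]
  intro hα
  have hQP : Q ≤ (P : Subgroup X) := by
    have h1 : IsPGroup p (Q ⊔ (P : Subgroup X) : Subgroup X) :=
      hQp.to_sup_of_normal_left P.isPGroup'
    have h2 := P.is_maximal' h1 le_sup_right
    exact le_sup_left.trans h2.le
  obtain ⟨A, hA⟩ : ∃ A : Subgroup X, A = Subgroup.centralizer (Q : Set X) := ⟨_, rfl⟩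
  have hAn : A.Normal := by rw [hA]; infer_instance
  have hAQ : A ≤ Q := hA ▸ hC
  have hAp : IsPGroup p A := hQp.to_le hAQ
  let _ : CommGroup A :=
    { (inferInstance : Group A) with
      mul_comm := by
        rintro ⟨a, ha⟩ ⟨b, hb⟩
        apply Subtype.ext
        have hb' := hb
        rw [hA] at hb'
        exact Subgroup.mem_centralizer_iff.1 hb' a (hAQ ha) }
  have hd : ∀ x, α x * x⁻¹ ∈ A := by
    intro x
    rw [hA, Subgroup.mem_centralizer_iff]
    intro q hq
    have hq' : x⁻¹ * q * x ∈ Q := by simpa using hQ.conj_mem q hq x⁻¹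
    have h1 := hα _ (hQP hq')
    rw [map_mul, map_mul, map_inv, hα q (hQP hq)] at h1
    have h2 : q * α x = α x * (x⁻¹ * q * x) := by rw [← h1]; group
    rw [← mul_assoc, h2]; group
  let d : X → A := fun x => ⟨α x * x⁻¹, hd x⟩
  have hmul : ∀ x y, d (x * y) = d x * MulAut.conjNormal x (d y) := by
    intro x y
    apply Subtype.ext
    simp only [d, Subgroup.coe_mul, MulAut.conjNormal_apply, map_mul]
    group
  have hdP : ∀ x y, y ∈ (P : Subgroup X) → d (x * y) = d x := by
    intro x y hy
    apply Subtype.ext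
    simp only [d, map_mul, hα y hy]
    group
  have : Fintype (X ⧸ (P : Subgroup X)) := Fintype.ofFinite _
  let D : X ⧸ (P : Subgroup X) → A := fun c => d c.out
  have hD : ∀ x : X, D (x : X ⧸ (P : Subgroup X)) = d x := by
    intro x
    obtain ⟨h, hh⟩ := QuotientGroup.mk_out_eq_mul (P : Subgroup X) x
    simp only [D]
    rw [hh, hdP _ _ h.2]
  have hDg : ∀ (g : X) (c : X ⧸ (P : Subgroup X)),
      D (g • c) = d g * MulAut.conjNormal g (D c) := by
    intro g c
    induction c using QuotientGroup.induction_on with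
    | H x => rw [MulAction.Quotient.smul_coe, smul_eq_mul, hD, hD, hmul]
  have hcop : p.Coprime (P : Subgroup X).index :=
    (Nat.Prime.coprime_iff_not_dvd Fact.out).2 P.not_dvd_index
  obtain ⟨a, ha⟩ := (hAp.powEquiv hcop).surjective (∏ c, D c)
  have ha' : a ^ (P : Subgroup X).index = ∏ c, D c := ha
  have key : ∀ g, d g * MulAut.conjNormal g a = a := by
    intro g
    apply (hAp.powEquiv hcop).injective
    change (d g * MulAut.conjNormal g a) ^ (P : Subgroup X).index
      = a ^ (P : Subgroup X).index
    rw [mul_pow, ← map_pow, ha', map_prod]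
    have h1 : ∏ c, D c = ∏ c, D (g • c) :=
      (Equiv.prod_comp (MulAction.toPerm g) D).symm
    rw [h1]
    simp only [hDg]
    rw [Finset.prod_mul_distrib, Finset.prod_const, Finset.card_univ,
      Subgroup.index, Nat.card_eq_fintype_card]
  have hag : ∀ g, α g = (a : X) * g * (a : X)⁻¹ := by
    intro g
    have h := congrArg Subtype.val (key g)
    simp only [d, Subgroup.coe_mul, MulAut.conjNormal_apply] at h
    have h2 : α g * (a : X) * g⁻¹ = a := by
      refine Eq.trans ?_ h
      group
    exact eq_mul_inv_iff_mul_eq.2 (mul_inv_eq_iff_eq_mul.1 h2)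
  refine ⟨a, ⟨hQP (hAQ a.2), ?_⟩, ?_⟩
  · refine Subgroup.mem_centralizer_iff.2 ?_
    intro x hx
    have h := hag x
    rw [hα x hx] at h
    exact eq_mul_inv_iff_mul_eq.1 h
  · ext g
    rw [hag, MulAut.conj_apply]
end

section
/- Let X be a finite group, p a prime, and Q a normal subgroup of X that is an extraspecial p-group, with C_X(Q) = Z(Q). Suppose there is a perfect normal subgroup Y of X (i.e. Y = [Y,Y]) such that p does not divide the index |X : QY|. Then: (i) every automorphism α of X with α(Q) = Q and α(q)q⁻¹ ∈ Z(Q) for all q ∈ Q equals conj(q₀) for some q₀ ∈ Q; and (ii) every automorphism of X fixing Q pointwise equals conj(z) for some z ∈ Z(Q). -/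
/-- A `p`-group is extraspecial if its center, derived subgroup and Frattini subgroup
coincide and have order `p`. -/
def IsExtraspecial (p : ℕ) (Q : Type*) [Group Q] : Prop :=
  IsPGroup p Q ∧ Subgroup.center Q = commutator Q ∧ Subgroup.center Q = frattini Q ∧
    Nat.card (Subgroup.center Q) = p

/-- Homomorphisms from a finite abelian group to a group of prime order: at most `|A|`. -/
theorem aux_card_hom_le {A C : Type*} [CommGroup A] [Finite A] [CommGroup C] {p : ℕ}
    (hp : p.Prime) (hC : Nat.card C = p) : Nat.card (A →* C) ≤ Nat.card A := by
  have : Fact p.Prime := ⟨hp⟩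
  have : NeZero p := ⟨hp.ne_zero⟩
  have : IsCyclic C := isCyclic_of_prime_card hC
  have hcard : Nat.card C = Nat.card (rootsOfUnity p ℂ) := by
    rw [hC, Complex.card_rootsOfUnity]
  let e : C ≃* rootsOfUnity p ℂ := mulEquivOfCyclicCardEq hcard
  obtain ⟨d⟩ := CommGroup.monoidHom_mulEquiv_of_hasEnoughRootsOfUnity A ℂ
  rw [← Nat.card_congr d.toEquiv]
  have : Finite (A →* ℂˣ) := Finite.of_equiv _ d.symm.toEquiv
  refine Nat.card_le_card_of_injective
    (fun f : A →* C => ((rootsOfUnity p ℂ).subtype.comp e.toMonoidHom).comp f) ?_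
  intro f g h
  ext a
  have := DFunLike.congr_fun h a
  exact e.injective (Subtype.ext this)

/-- Every homomorphism from an extraspecial group to its center is a commutator map. -/
theorem aux_hom_center {G : Type*} [Group G] [Finite G] {p : ℕ} (hp : p.Prime)
    (hZ : Subgroup.center G = commutator G) (hc : Nat.card (Subgroup.center G) = p)
    (f : G →* Subgroup.center G) :
    ∃ g : G, ∀ x : G, (f x : G) = g * x * g⁻¹ * x⁻¹ := by
  let _ : CommGroup (Subgroup.center G) :=
    { (inferInstance : Group (Subgroup.center G)) with
      mul_comm := fun a b => Subtype.ext (Subgroup.mem_center_iff.1 b.2 a) }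
  have hmem : ∀ g x : G, g * x * g⁻¹ * x⁻¹ ∈ Subgroup.center G := by
    intro g x
    rw [hZ]
    exact Subgroup.commutator_mem_commutator (Subgroup.mem_top g) (Subgroup.mem_top x)
  have hcomm : ∀ g x y : G, y * (g * x * g⁻¹ * x⁻¹) = (g * x * g⁻¹ * x⁻¹) * y :=
    fun g x y => Subgroup.mem_center_iff.1 (hmem g x) y
  let Φ : G →* (G →* Subgroup.center G) := MonoidHom.mk'
    (fun g => MonoidHom.mk' (fun x => ⟨g * x * g⁻¹ * x⁻¹, hmem g x⟩) (by
      intro x y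
      ext
      simp only [Subgroup.coe_mul]
      calc g * (x * y) * g⁻¹ * (x * y)⁻¹
          = (g * x * g⁻¹ * x⁻¹) * (x * (g * y * g⁻¹ * y⁻¹)) * x⁻¹ := by group
        _ = _ := by rw [hcomm g y x]; group)) (by
      intro g h
      ext x
      change g * h * x * (g * h)⁻¹ * x⁻¹ = (g * x * g⁻¹ * x⁻¹) * (h * x * h⁻¹ * x⁻¹)
      calc g * h * x * (g * h)⁻¹ * x⁻¹
          = (g * (h * x * h⁻¹ * x⁻¹)) * x * g⁻¹ * x⁻¹ := by group
        _ = (h * x * h⁻¹ * x⁻¹) * (g * x * g⁻¹ * x⁻¹) := by rw [hcomm h x g]; group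
        _ = _ := by rw [hcomm])
  have hΦ : ∀ g x, (Φ g x : G) = g * x * g⁻¹ * x⁻¹ := fun g x => rfl
  have hker : Φ.ker = commutator G := by
    rw [← hZ]
    ext g
    rw [MonoidHom.mem_ker, Subgroup.mem_center_iff]
    constructor
    · intro h x
      have h1 : (Φ g x : G) = 1 := by rw [h]; rfl
      rw [hΦ, mul_inv_eq_one, mul_inv_eq_iff_eq_mul] at h1
      exact h1.symm
    · intro h
      ext x
      rw [hΦ, ← h x]
      simp
  have : Finite (G →* Subgroup.center G) := Finite.of_injective _ DFunLike.coe_injective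
  have hcardle : Nat.card (G →* Subgroup.center G) ≤ Nat.card Φ.range := by
    rw [Nat.card_congr (Abelianization.lift (G := G) (A := Subgroup.center G))]
    rw [← Nat.card_congr (QuotientGroup.quotientKerEquivRange Φ).toEquiv, hker]
    exact aux_card_hom_le (A := Abelianization G) hp hc
  have htop : Φ.range = ⊤ := Subgroup.eq_top_of_le_card _ hcardle
  obtain ⟨g, hg⟩ : f ∈ Φ.range := htop ▸ Subgroup.mem_top f
  exact ⟨g, fun x => by rw [← hg, hΦ]⟩

/-- Vanishing of the first cohomology, in the form needed here. -/
theorem aux_cocycle {X : Type*} [Group X] [Finite X] {p : ℕ} (hp : p.Prime)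
    (Z K : Subgroup X) [Z.Normal] [K.Normal] (hZc : Nat.card Z = p)
    (hK : ¬ p ∣ K.index) (α : MulAut X)
    (hα : ∀ x, α x * x⁻¹ ∈ Z) (hαK : ∀ k ∈ K, α k = k) :
    ∃ z ∈ Z, α = MulAut.conj z := by
  have : Fact p.Prime := ⟨hp⟩
  have : IsCyclic Z := isCyclic_of_prime_card hZc
  let : CommGroup Z := IsCyclic.commGroup
  let : Fintype (X ⧸ K) := Fintype.ofFinite _
  let δ : X ⧸ K → Z := Quotient.lift (s := QuotientGroup.leftRel K)
    (fun x => ⟨α x * x⁻¹, hα x⟩) (by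
      intro a b hab
      have hab : a⁻¹ * b ∈ K := QuotientGroup.leftRel_apply.1 hab
      have h := hαK _ hab
      rw [map_mul, map_inv, inv_mul_eq_iff_eq_mul] at h
      ext
      simp only [h]
      group)
  have hδ : ∀ x : X, (δ (x : X ⧸ K) : X) = α x * x⁻¹ := fun x => rfl
  have hmul : ∀ (x : X) (c : X ⧸ K),
      δ ((x : X ⧸ K) * c) = δ (x : X ⧸ K) * MulAut.conjNormal x (δ c) := by
    intro x c
    induction c using QuotientGroup.induction_on with
    | H y =>
      ext
      rw [← QuotientGroup.mk_mul, hδ, Subgroup.coe_mul, hδ, MulAut.conjNormal_apply, hδ, map_mul]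
      group
  let z : Z := ∏ c, δ c
  have hz : ∀ x : X, z = δ (x : X ⧸ K) ^ K.index * MulAut.conjNormal x z := by
    intro x
    calc z = ∏ c, δ ((x : X ⧸ K) * c) :=
          (Equiv.prod_comp (Equiv.mulLeft (x : X ⧸ K)) δ).symm
      _ = ∏ c, δ (x : X ⧸ K) * MulAut.conjNormal x (δ c) :=
          Finset.prod_congr rfl fun c _ => hmul x c
      _ = _ := by
          rw [Finset.prod_mul_distrib, Finset.prod_const, ← map_prod, Finset.card_univ,
            ← Nat.card_eq_fintype_card]
          rfl
  have hcop : (Nat.card Z).Coprime K.index := by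
    rw [hZc]; exact (Nat.Prime.coprime_iff_not_dvd hp).2 hK
  obtain ⟨w, hw⟩ := (powCoprime hcop).surjective z
  have hw : w ^ K.index = z := hw
  refine ⟨w, w.2, ?_⟩
  ext x
  have h1 := hz x
  rw [← hw, map_pow, ← mul_pow] at h1
  have h2 : w = δ (x : X ⧸ K) * MulAut.conjNormal x w := (powCoprime hcop).injective h1
  have h3 := congrArg (Subtype.val) h2
  rw [Subgroup.coe_mul, hδ, MulAut.conjNormal_apply] at h3
  rw [MulAut.conj_apply]
  rw [eq_mul_inv_iff_mul_eq]
  have h4 : (w : X) = α x * w * x⁻¹ := h3.trans (by group)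
  exact (eq_mul_inv_iff_mul_eq.1 h4).symm

open scoped commutatorElement in
theorem aux_part_two {X : Type*} [Group X] [Finite X]
    {p : ℕ} (hp : p.Prime) (Q : Subgroup X) (hQ : Q.Normal)
    (hcard : Nat.card (Q ⊓ Subgroup.centralizer (Q : Set X) : Subgroup X) = p)
    (hC : Subgroup.centralizer (Q : Set X) ≤ Q)
    (Y : Subgroup X) (hY : Y.Normal) (hYperf : ⁅Y, Y⁆ = Y)
    (hindex : ¬ p ∣ (Q ⊔ Y).index) (α : MulAut X) (hα : ∀ q ∈ Q, α q = q) :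
    ∃ z ∈ Q ⊓ Subgroup.centralizer (Q : Set X), α = MulAut.conj z := by
  have hδC : ∀ x, α x * x⁻¹ ∈ Subgroup.centralizer (Q : Set X) := by
    intro x
    rw [Subgroup.mem_centralizer_iff]
    intro q hq
    have h1 := hα _ (hQ.conj_mem q hq x⁻¹)
    rw [inv_inv, map_mul, map_mul, map_inv, hα q hq] at h1
    have h2 : q * α x = α x * (x⁻¹ * q * x) := by rw [← h1]; group
    calc q * (α x * x⁻¹) = (q * α x) * x⁻¹ := by group
      _ = _ := by rw [h2]; group
  have hδ : ∀ x, α x * x⁻¹ ∈ Q ⊓ Subgroup.centralizer (Q : Set X) :=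
    fun x => ⟨hC (hδC x), hδC x⟩
  have : Fact p.Prime := ⟨hp⟩
  generalize hZ : Q ⊓ Subgroup.centralizer (Q : Set X) = Z at *
  have hZn : Z.Normal := by rw [← hZ]; infer_instance
  have : IsCyclic Z := isCyclic_of_prime_card hcard
  have hYZ : Y ≤ (MulAut.conjNormal (H := Z)).ker := by
    rw [← hYperf, Subgroup.commutator_le]
    intro a _ b _
    rw [MonoidHom.mem_ker, map_commutatorElement, commutatorElement_eq_one_iff_mul_comm]
    obtain ⟨m, hm⟩ := MonoidHom.map_cyclic (MulAut.conjNormal (H := Z) a).toMonoidHom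
    ext z
    have h1 : ∀ z : Z, MulAut.conjNormal a z = z ^ m := hm
    simp only [MulAut.mul_apply, h1, map_zpow]
  have hYc : ∀ y ∈ Y, ∀ z ∈ Z, y * z = z * y := by
    intro y hy z hz
    have h1 := DFunLike.congr_fun (MonoidHom.mem_ker.1 (hYZ hy)) (⟨z, hz⟩ : Z)
    have h2 := congrArg Subtype.val h1
    rw [MulAut.conjNormal_apply] at h2
    exact mul_inv_eq_iff_eq_mul.1 h2
  have hYfix : Y ≤ MonoidHom.eqLocus α.toMonoidHom (MonoidHom.id X) := by
    conv_lhs => rw [← hYperf]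
    rw [Subgroup.commutator_le]
    intro a ha b hb
    change α ⁅a, b⁆ = ⁅a, b⁆
    obtain ⟨z, hz, hza⟩ : ∃ z ∈ Z, α a = z * a := ⟨_, hδ a, by group⟩
    obtain ⟨w, hw, hwb⟩ : ∃ w ∈ Z, α b = w * b := ⟨_, hδ b, by group⟩
    have haz := hYc a ha z hz
    have haw := hYc a ha w hw
    have hbz := hYc b hb z hz
    have hbw := hYc b hb w hw
    have hzw : z * w = w * z := by
      rw [← hZ] at hz hw
      exact (Subgroup.mem_centralizer_iff.1 hw.2 z hz.1)
    have e1 : z * a * (w * b) = (z * w) * (a * b) := by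
      calc _ = z * (a * w) * b := by group
        _ = _ := by rw [haw]; group
    have e2 : (w * b) * (z * a) = (z * w) * (b * a) := by
      calc _ = w * (b * z) * a := by group
        _ = (w * z) * (b * a) := by rw [hbz]; group
        _ = _ := by rw [hzw]
    have hcent : (a * b) * (b * a)⁻¹ * (z * w) = (z * w) * ((a * b) * (b * a)⁻¹) := by
      have ca : Commute a (z * w) := Commute.mul_right haz haw
      have cb : Commute b (z * w) := Commute.mul_right hbz hbw
      exact (ca.mul_left cb).mul_left (cb.mul_left ca).inv_left
    rw [map_commutatorElement, hza, hwb]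
    calc ⁅z * a, w * b⁆ = (z * a * (w * b)) * ((w * b) * (z * a))⁻¹ := by
          rw [commutatorElement_def]; group
      _ = (z * w) * ((a * b) * (b * a)⁻¹) * (z * w)⁻¹ := by rw [e1, e2]; group
      _ = (a * b) * (b * a)⁻¹ := by rw [← hcent]; group
      _ = _ := by rw [commutatorElement_def]; group
  have hQfix : Q ≤ MonoidHom.eqLocus α.toMonoidHom (MonoidHom.id X) := fun q hq => hα q hq
  exact aux_cocycle hp Z (Q ⊔ Y) hcard hindex α hδ fun k hk => sup_le hQfix hYfix hk

/-- Lemma 2.1(d): Let `X` be a finite group, `p` a prime, and `Q` a normal extraspecial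
`p`-subgroup of `X` with `C_X(Q) = Z(Q)` (expressed as `C_X(Q) ≤ Q`). Suppose there is a
perfect normal subgroup `Y` of `X` with `p ∤ |X : QY|` (i.e. `X/(Q·X^(∞))` is a `p'`-group).
Then every automorphism of `X` acting trivially on `Q/Z(Q)` is conjugation by an element
of `Q`, and every automorphism of `X` fixing `Q` pointwise is conjugation by an element of
`Z(Q)`. -/
theorem aut_centralizing_extraspecial_fitting {X : Type*} [Group X] [Finite X]
    {p : ℕ} (hp : p.Prime) (Q : Subgroup X) (hQ : Q.Normal)
    (hextra : IsExtraspecial p Q)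
    (hC : Subgroup.centralizer (Q : Set X) ≤ Q)
    (Y : Subgroup X) (hY : Y.Normal) (hYperf : ⁅Y, Y⁆ = Y)
    (hindex : ¬ p ∣ (Q ⊔ Y).index) :
    (∀ α : MulAut X,
      (∀ q ∈ Q, α q * q⁻¹ ∈ Q ⊓ Subgroup.centralizer (Q : Set X)) →
      ∃ q₀ ∈ Q, α = MulAut.conj q₀) ∧
    (∀ α : MulAut X, (∀ q ∈ Q, α q = q) →
      ∃ z ∈ Q ⊓ Subgroup.centralizer (Q : Set X), α = MulAut.conj z) := by
  obtain ⟨-, hZ, -, hcard⟩ := hextra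
  have hmap : (Subgroup.center Q).map Q.subtype = Q ⊓ Subgroup.centralizer (Q : Set X) := by
    ext x
    simp only [Subgroup.mem_map, Subgroup.mem_inf, Subgroup.mem_centralizer_iff,
      Subgroup.mem_center_iff]
    constructor
    · rintro ⟨y, hy, rfl⟩
      exact ⟨y.2, fun q hq => congrArg Subtype.val (hy ⟨q, hq⟩)⟩
    · rintro ⟨hx, h⟩
      exact ⟨⟨x, hx⟩, fun q => Subtype.ext (h q q.2), rfl⟩
  have hcard' : Nat.card (Q ⊓ Subgroup.centralizer (Q : Set X) : Subgroup X) = p := by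
    rw [← hmap, Subgroup.card_map_of_injective Q.subtype_injective, hcard]
  have part2 := aux_part_two hp Q hQ hcard' hC Y hY hYperf hindex
  refine ⟨fun α hα => ?_, part2⟩
  have hcen : ∀ q ∈ Q, ∀ r ∈ Q, r * (α q * q⁻¹) = (α q * q⁻¹) * r :=
    fun q hq r hr => Subgroup.mem_centralizer_iff.1 (hα q hq).2 r hr
  let f : Q →* Subgroup.center Q := MonoidHom.mk'
    (fun q => ⟨⟨α q * (q : X)⁻¹, (hα q q.2).1⟩, by
      rw [Subgroup.mem_center_iff]
      exact fun r => Subtype.ext (hcen q q.2 r r.2)⟩) (by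
    intro a b
    ext
    change α ((a : X) * b) * ((a : X) * b)⁻¹ = (α a * (a : X)⁻¹) * (α b * (b : X)⁻¹)
    calc α ((a : X) * b) * ((a : X) * b)⁻¹
        = (α a * (a : X)⁻¹) * ((a : X) * (α b * (b : X)⁻¹)) * (a : X)⁻¹ := by
          rw [map_mul]; group
      _ = _ := by rw [hcen b b.2 a a.2]; group)
  obtain ⟨g, hg⟩ := aux_hom_center hp hZ hcard f
  have hg' : ∀ q ∈ Q, α q = g * q * (g : X)⁻¹ := by
    intro q hq
    have h : α q * q⁻¹ = g * q * (g : X)⁻¹ * q⁻¹ := congrArg Subtype.val (hg ⟨q, hq⟩)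
    exact mul_right_cancel h
  obtain ⟨z, hz, h⟩ := part2 ((MulAut.conj (g : X))⁻¹ * α) (by
    intro q hq
    rw [MulAut.mul_apply, hg' q hq, MulAut.conj_inv_apply]
    group)
  refine ⟨g * z, Q.mul_mem g.2 hz.1, ?_⟩
  rw [map_mul, ← h, mul_inv_cancel_left]
end

section
/- Let T be a finite 2-group with |Z(T)| = 2, and let U be a normal subgroup of T that is a Klein four-group. Then U is not contained in Z(T), the centralizer T₀ = C_T(U) has index 2 in T, and the set of elements w of Z(T₀) with w² = 1 is exactly U (that is, Ω₁(Z(C_T(U))) = U). -/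
/-- Start of the proof of Lemma 2.3: Let `T` be a finite 2-group with `|Z(T)| = 2` and
`U ⊴ T` a Klein four-group. Then `U ≰ Z(T)`, `T₀ = C_T(U)` has index 2 in `T`, and
`Ω₁(Z(C_T(U))) = U`. -/
theorem klein_four_normal_in_twogroup {T : Type*} [Group T] [Finite T]
    (h2 : IsPGroup 2 T) (hZ : Nat.card (Subgroup.center T) = 2)
    (U : Subgroup T) (hUnormal : U.Normal) (hUcard : Nat.card U = 4)
    (hUelem : ∀ u ∈ U, u * u = 1) :
    ¬ U ≤ Subgroup.center T ∧
    (Subgroup.centralizer (U : Set T)).index = 2 ∧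
    (∀ w : T,
      (w ∈ Subgroup.centralizer (U : Set T) ⊓
          Subgroup.centralizer ((Subgroup.centralizer (U : Set T) : Subgroup T) : Set T) ∧
        w * w = 1) ↔ w ∈ U) := by
  have := hUnormal
  have : Fact (Nat.Prime 2) := ⟨Nat.prime_two⟩
  have hnot : ¬ U ≤ Subgroup.center T := by
    intro h
    have := Subgroup.card_le_of_le h
    omega
  -- a nontrivial central element in U
  have hz : ∃ z ∈ U, z ∈ Subgroup.center T ∧ z ≠ 1 := by
    have hp : IsPGroup 2 (ConjAct T) := h2.of_equiv ConjAct.toConjAct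
    obtain ⟨b, hb, hb1⟩ := hp.exists_fixed_point_of_prime_dvd_card_of_fixed_point U
      (by rw [hUcard]; norm_num) (a := 1) (fun g => smul_one g)
    refine ⟨b, b.2, ?_, fun h => hb1 (Subtype.ext h.symm)⟩
    rw [Subgroup.mem_center_iff]
    intro g
    have h := congrArg Subtype.val (hb (ConjAct.toConjAct g))
    rw [ConjAct.Subgroup.val_conj_smul, ConjAct.toConjAct_smul] at h
    exact mul_inv_eq_iff_eq_mul.mp h
  obtain ⟨z, hzU, hzZ, hz1⟩ := hz
  have hzc : ∀ g, g * z = z * g := Subgroup.mem_center_iff.mp hzZ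
  have hzz := hUelem z hzU
  have hcen : ∀ x ∈ Subgroup.center T, x = 1 ∨ x = z := by
    intro x hx
    by_cases h1 : x = 1
    · exact Or.inl h1
    · right
      obtain ⟨y, -, hy⟩ := (Nat.card_eq_two_iff' (1 : Subgroup.center T)).mp hZ
      have e1 := hy ⟨x, hx⟩ (fun h => h1 (congrArg Subtype.val h))
      have e2 := hy ⟨z, hzZ⟩ (fun h => hz1 (congrArg Subtype.val h))
      exact congrArg Subtype.val (e1.trans e2.symm)
  have hcenU : Subgroup.center T ≤ U := by
    intro x hx
    rcases hcen x hx with rfl | rfl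
    · exact U.one_mem
    · exact hzU
  obtain ⟨u, huU, huZ⟩ := SetLike.not_le_iff_exists.mp hnot
  have huu := hUelem u huU
  have hu1 : u ≠ 1 := fun h => huZ (h ▸ Subgroup.one_mem _)
  have huz : u ≠ z := fun h => huZ (h ▸ hzZ)
  have hUset : ({1, z, u, z * u} : Set T) = (U : Set T) := by
    apply Set.eq_of_subset_of_ncard_le
    · rintro x (rfl | rfl | rfl | rfl)
      · exact U.one_mem
      · exact hzU
      · exact huU
      · exact U.mul_mem hzU huU
    · have h4 : (U : Set T).ncard = 4 := hUcard
      rw [h4]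
      have h1 : z * u ≠ 1 := fun h => huz (mul_left_cancel (h.trans hzz.symm))
      have h2' : z * u ≠ z := fun h => hu1 (by simpa using h)
      have h3 : z * u ≠ u := fun h => hz1 (by simpa using h)
      rw [Set.ncard_insert_of_notMem, Set.ncard_insert_of_notMem, Set.ncard_pair h3.symm]
      · simp [huz.symm, h2'.symm, hu1]
      · simp only [Set.mem_insert_iff, Set.mem_singleton_iff, not_or]
        exact ⟨hz1.symm, hu1.symm, h1.symm⟩
    · exact Set.toFinite _
  have hUmem : ∀ x ∈ U, x = 1 ∨ x = z ∨ x = u ∨ x = z * u := by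
    intro x hx
    have : x ∈ ({1, z, u, z * u} : Set T) := by rw [hUset]; exact hx
    simpa using this
  have hC : ∀ g, g ∈ Subgroup.centralizer (U : Set T) ↔ g * u = u * g := by
    intro g
    rw [Subgroup.mem_centralizer_iff]
    constructor
    · intro h
      exact (h u huU).symm
    · intro h x hx
      rcases hUmem x hx with rfl | rfl | rfl | rfl
      · simp
      · exact (hzc g).symm
      · exact h.symm
      · rw [mul_assoc, ← h, ← mul_assoc, ← hzc g, mul_assoc]
  have hconj : ∀ g, g * u = u * g ∨ g * u = z * u * g := by
    intro g
    have hg := hUnormal.conj_mem u huU g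
    rcases hUmem _ hg with h | h | h | h
    · exact absurd (conj_eq_one_iff.mp h) hu1
    · rw [mul_inv_eq_iff_eq_mul, ← hzc] at h
      exact absurd (mul_left_cancel h) huz
    · exact Or.inl (mul_inv_eq_iff_eq_mul.mp h)
    · exact Or.inr (mul_inv_eq_iff_eq_mul.mp h)
  have hidx : ∃ a, a ∉ Subgroup.centralizer (U : Set T) ∧
      ∀ b, (b * a ∈ Subgroup.centralizer (U : Set T)) ∨
        (b ∈ Subgroup.centralizer (U : Set T)) := by
    have : ∃ a, ¬ (a * u = u * a) := by
      by_contra! h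
      exact huZ (Subgroup.mem_center_iff.mpr h)
    obtain ⟨a, ha⟩ := this
    refine ⟨a, fun h => ha ((hC a).mp h), fun b => ?_⟩
    rw [hC, hC]
    rcases hconj b with hb | hb
    · exact Or.inr hb
    · left
      have ha' := (hconj a).resolve_left ha
      calc b * a * u = b * (z * u * a) := by rw [mul_assoc, ha']
        _ = (b * z) * u * a := by group
        _ = z * (b * u) * a := by rw [hzc]; group
        _ = (z * z) * u * b * a := by rw [hb]; group
        _ = u * (b * a) := by rw [hzz]; group
  have hindex := Subgroup.index_eq_two_iff_exists_notMem_and.mpr hidx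
  refine ⟨hnot, hindex, ?_⟩
  obtain ⟨a, haC, hcov⟩ := hidx
  have hau : a * u = z * u * a := (hconj a).resolve_left (fun h => haC ((hC a).mpr h))
  have haa := Subgroup.mul_self_mem_of_index_two hindex a
  -- an element commuting with C and a is central
  have key : ∀ x, (∀ c ∈ Subgroup.centralizer (U : Set T), c * x = x * c) →
      a * x = x * a → x ∈ Subgroup.center T := by
    intro x hx hax
    rw [Subgroup.mem_center_iff]
    intro g
    rcases hcov g with h | h
    · have h' := hx _ h
      apply mul_right_cancel (b := a)
      calc g * x * a = g * a * x := by rw [mul_assoc, ← hax, mul_assoc]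
        _ = x * g * a := by rw [h', mul_assoc]
    · exact hx g h
  intro w
  constructor
  · rintro ⟨⟨hwC, hwCC⟩, hww⟩
    have hwc : ∀ c ∈ Subgroup.centralizer (U : Set T), c * w = w * c :=
      Subgroup.mem_centralizer_iff.mp hwCC
    have hnorm : ∀ c ∈ Subgroup.centralizer (U : Set T),
        a⁻¹ * c * a ∈ Subgroup.centralizer (U : Set T) := by
      intro c hc
      have := (Subgroup.normal_of_index_eq_two hindex).conj_mem c hc a⁻¹
      simpa using this
    have hcaw : ∀ c ∈ Subgroup.centralizer (U : Set T),
        c * (a * w * a⁻¹) = (a * w * a⁻¹) * c := by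
      intro c hc
      have h := hwc _ (hnorm c hc)
      calc c * (a * w * a⁻¹) = a * ((a⁻¹ * c * a) * w) * a⁻¹ := by group
        _ = a * w * a⁻¹ * c := by rw [h]; group
    have hcent : a * w * a⁻¹ * w ∈ Subgroup.center T := by
      apply key
      · intro c hc
        rw [← mul_assoc, hcaw c hc, mul_assoc, hwc c hc, ← mul_assoc]
      · have h1 : w * (a * w * a⁻¹) = a * w * a⁻¹ * w := hcaw w hwC
        have h2' := hwc _ haa
        calc a * (a * w * a⁻¹ * w) = ((a * a) * w) * a⁻¹ * w := by group
          _ = w * (a * w * a⁻¹) * a := by rw [h2']; group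
          _ = a * w * a⁻¹ * w * a := by rw [h1]
    rcases hcen _ hcent with h | h
    · apply hcenU
      apply key w hwc
      have : a * w * a⁻¹ = w := by
        rw [eq_inv_of_mul_eq_one_left h]; exact inv_eq_of_mul_eq_one_left hww
      exact mul_inv_eq_iff_eq_mul.mp this
    · have haw : a * w = z * w * a := by
        have : a * w * a⁻¹ = z * w := by
          rw [← h, mul_assoc (a * w * a⁻¹), hww, mul_one]
        exact mul_inv_eq_iff_eq_mul.mp this
      have hwu : w * u ∈ U := by
        apply hcenU
        apply key
        · intro c hc
          rw [← mul_assoc, hwc c hc, mul_assoc, (hC c).mp hc, ← mul_assoc]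
        · calc a * (w * u) = z * w * (a * u) := by rw [← mul_assoc, haw, mul_assoc]
            _ = z * (w * z) * u * a := by rw [hau]; group
            _ = (z * z) * w * u * a := by rw [hzc]; group
            _ = w * u * a := by rw [hzz, one_mul]
      have := U.mul_mem hwu huU
      rwa [mul_assoc, huu, mul_one] at this
  · intro hw
    have hcomm : ∀ c ∈ Subgroup.centralizer (U : Set T), c * w = w * c :=
      fun c hc => (Subgroup.mem_centralizer_iff.mp hc w hw).symm
    refine ⟨⟨?_, Subgroup.mem_centralizer_iff.mpr hcomm⟩, hUelem w hw⟩
    apply Subgroup.mem_centralizer_iff.mpr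
    intro x hx
    have e := hUelem _ (U.mul_mem hx hw)
    have e1 := hUelem x hx
    have e2 := hUelem w hw
    calc x * w = (x * w)⁻¹ := eq_inv_of_mul_eq_one_left e
      _ = w⁻¹ * x⁻¹ := mul_inv_rev _ _
      _ = w * x := by rw [inv_eq_of_mul_eq_one_left e1, inv_eq_of_mul_eq_one_left e2]
end

section
/- Let the finite group G act on a finite set Ω and let α ∈ Ω, with stabilizer G_α. Assume: (a) the action of G on Ω is faithful and primitive; (b) there is a G_α-orbit Ψ on Ω \ {α} such that G_α acts faithfully and primitively on Ψ; (c) Ψ is the unique G_α-orbit on Ω \ {α} of cardinality |Ψ|; (d) either (d1) every G_α-orbit Ψ' on Ω \ {α} satisfies conditions (b) and (c) in place of Ψ (G_α faithful and primitive on Ψ', and Ψ' the unique orbit of its cardinality), or (d2) for every β ∈ Ψ, the only automorphism of G_α fixing the two-point stabilizer G_α ∩ G_β pointwise is the identity; and (e) G_α is not cyclic. Then the only automorphism of G fixing G_α pointwise is the identity, i.e., C_{Aut(G)}(G_α) = 1. -/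
/-- A subgroup `H` of `G` acts faithfully and primitively on an (invariant) subset `s`
of a `G`-set: only `1 ∈ H` fixes `s` pointwise, `H` is transitive on `s`, and every
block of `H` contained in `s` is trivial. -/
def IsFaithfulPrimitiveOn {G Ω : Type*} [Group G] [MulAction G Ω]
    (H : Subgroup G) (s : Set Ω) : Prop :=
  (∀ g ∈ H, (∀ x ∈ s, g • x = x) → g = 1) ∧
  (∀ x ∈ s, ∀ y ∈ s, ∃ g ∈ H, g • x = y) ∧
  (∀ B ⊆ s, (∀ g ∈ H, (g • ·) '' B = B ∨ Disjoint ((g • ·) '' B) B) →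
    B.Subsingleton ∨ B = s)

/-- Criterion: to be a block it suffices to be stable under each element meeting it. -/
theorem block_of_stable {G Ω : Type*} [Group G] [MulAction G Ω] (H : Subgroup G) (B : Set Ω)
    (hB : ∀ g ∈ H, ∀ w ∈ B, g • w ∈ B → ∀ y ∈ B, g • y ∈ B) :
    ∀ g ∈ H, (g • ·) '' B = B ∨ Disjoint ((g • ·) '' B) B := by
  intro g hg
  by_cases h : ∃ w ∈ B, g • w ∈ B
  · left
    obtain ⟨w, hw, hgw⟩ := h
    apply Set.Subset.antisymm
    · rintro _ ⟨y, hy, rfl⟩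
      exact hB g hg w hw hgw y hy
    · intro y hy
      refine ⟨g⁻¹ • y, ?_, by simp⟩
      exact hB g⁻¹ (H.inv_mem hg) (g • w) hgw (by simpa using hw) y hy
  · right
    rw [Set.disjoint_left]
    rintro _ ⟨y, hy, rfl⟩ hgy
    exact h ⟨y, hy, hgy⟩

/-- A faithful primitive group with a nontrivial injective centralizing map is cyclic. -/
theorem cyclic_of_commuting {G Ω : Type*} [Group G] [MulAction G Ω] (H : Subgroup G) (s : Set Ω)
    (hs : IsFaithfulPrimitiveOn H s) (hinv : ∀ h ∈ H, ∀ y ∈ s, h • y ∈ s)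
    (σ : Ω → Ω) (hσ : Function.Injective σ)
    (hc : ∀ h ∈ H, ∀ x, σ (h • x) = h • σ x) (x : Ω) (hx : x ∈ s) (hσx : σ x ∈ s)
    (hne : σ x ≠ x) : IsCyclic H := by
  obtain ⟨h1, h2, h3⟩ := hs
  have hreg : ∀ h ∈ H, h • x = x → h = 1 := by
    let B : Set Ω := {y | y ∈ s ∧ ∀ h ∈ H, h • y = y ↔ h • x = x}
    have hBblock := block_of_stable H B (by
      rintro g hg w ⟨hw, hw'⟩ ⟨_, hgw⟩ y ⟨hy, hy'⟩
      refine ⟨hinv g hg y hy, fun h hh => ?_⟩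
      have e : ∀ z : Ω, h • g • z = g • z ↔ (g⁻¹ * h * g) • z = z := by
        intro z
        rw [mul_smul, mul_smul, inv_smul_eq_iff]
      have hm : g⁻¹ * h * g ∈ H := H.mul_mem (H.mul_mem (H.inv_mem hg) hh) hg
      rw [e, hy' _ hm, ← hw' _ hm, ← e, hgw h hh])
    rcases h3 B (fun y hy => hy.1) hBblock with hB | hB
    · exfalso
      apply hne
      apply hB _ (⟨hx, fun _ _ => Iff.rfl⟩ : x ∈ B)
      refine ⟨hσx, fun h hh => ?_⟩
      rw [← hc h hh, hσ.eq_iff]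
    · intro h hh hhx
      apply h1 h hh
      intro y hy
      rw [← hB] at hy
      exact (hy.2 h hh).2 hhx
  by_cases htriv : ∃ h ∈ H, h ≠ 1
  · obtain ⟨h, hh, hh1⟩ := htriv
    let B : Set Ω := {y | ∃ k ∈ Subgroup.zpowers h, k • x = y}
    have hle : Subgroup.zpowers h ≤ H := by simpa using hh
    have hBblock := block_of_stable H B (by
      rintro g hg w ⟨k, hk, rfl⟩ ⟨l, hl, hgw⟩ y ⟨m, hm, rfl⟩
      have e : l⁻¹ * (g * k) = 1 := by
        apply hreg
        · exact H.mul_mem (H.inv_mem (hle hl)) (H.mul_mem hg (hle hk))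
        · rw [mul_smul, mul_smul, ← hgw, inv_smul_smul]
      have hgz : g ∈ Subgroup.zpowers h := by
        have : g = l * k⁻¹ := by
          rw [inv_mul_eq_one] at e
          rw [e]; group
        rw [this]
        exact Subgroup.mul_mem _ hl (Subgroup.inv_mem _ hk)
      exact ⟨g * m, Subgroup.mul_mem _ hgz hm, mul_smul _ _ _⟩)
    have hBs : B ⊆ s := by
      rintro _ ⟨k, hk, rfl⟩
      exact hinv k (hle hk) x hx
    rcases h3 B hBs hBblock with hB | hB
    · exfalso
      apply hh1
      apply hreg h hh
      exact hB ⟨h, Subgroup.mem_zpowers h, rfl⟩ ⟨1, Subgroup.one_mem _, one_smul _ _⟩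
    · refine ⟨⟨⟨h, hh⟩, fun g => ?_⟩⟩
      have : (g : G) • x ∈ B := by
        rw [hB]
        exact hinv g g.2 x hx
      obtain ⟨k, hk, hkx⟩ := this
      have e : k⁻¹ * (g : G) = 1 := by
        apply hreg
        · exact H.mul_mem (H.inv_mem (hle hk)) g.2
        · rw [mul_smul, ← hkx, inv_smul_smul]
      obtain ⟨n, rfl⟩ := hk
      refine ⟨n, Subtype.ext ?_⟩
      rw [inv_mul_eq_one] at e
      simpa using e
  · push Not at htriv
    have : Subsingleton H := ⟨fun u v => Subtype.ext ((htriv u u.2).trans (htriv v v.2).symm)⟩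
    infer_instance

theorem ncard_orbit_stabilizer {G Ω : Type*} [Group G] [MulAction G Ω] (a c : Ω) :
    (MulAction.orbit ↥(MulAction.stabilizer G a) c).ncard =
      (MulAction.stabilizer G c).relIndex (MulAction.stabilizer G a) := by
  rw [← MulAction.index_stabilizer]
  rfl

theorem relIndex_swap {G : Type*} [Group G] [Finite G] (A B : Subgroup G)
    (h : Nat.card A = Nat.card B) : A.relIndex B = B.relIndex A := by
  have h1 := Subgroup.relIndex_mul_relIndex ⊥ (A ⊓ B) B bot_le inf_le_right
  have h2 := Subgroup.relIndex_mul_relIndex ⊥ (A ⊓ B) A bot_le inf_le_left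
  rw [Subgroup.inf_relIndex_right, Subgroup.relIndex_bot_left, Subgroup.relIndex_bot_left] at h1
  rw [Subgroup.inf_relIndex_left, Subgroup.relIndex_bot_left, Subgroup.relIndex_bot_left] at h2
  rw [h, ← h1] at h2
  exact (Nat.eq_of_mul_eq_mul_left Nat.card_pos h2).symm

/-- Suborbits paired with one another have equal length. -/
theorem paired_ncard {G Ω : Type*} [Group G] [Finite G] [MulAction G Ω] (a : Ω) (g : G) :
    (MulAction.orbit ↥(MulAction.stabilizer G a) (g⁻¹ • a)).ncard =
      (MulAction.orbit ↥(MulAction.stabilizer G a) (g • a)).ncard := by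
  rw [ncard_orbit_stabilizer, ncard_orbit_stabilizer]
  have inj : Function.Injective (MulAut.conj g).toMonoidHom := (MulAut.conj g).injective
  rw [← Subgroup.relIndex_map_map_of_injective _ _ inj,
    ← MulAction.stabilizer_smul_eq_stabilizer_map_conj,
    ← MulAction.stabilizer_smul_eq_stabilizer_map_conj, smul_inv_smul]
  apply relIndex_swap
  rw [MulAction.stabilizer_smul_eq_stabilizer_map_conj]
  exact Nat.card_congr ((MulAction.stabilizer G a).equivMapOfInjective _ inj).toEquiv

/-- Lemma 2.4: Suppose the finite group `G` acts on the finite set `Ω`, `a ∈ Ω`, and: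
(a) `G` is faithful and primitive on `Ω`; (b) the stabilizer `G_a` is faithful and
primitive on some orbit `Ψ` of `G_a` on `Ω \ {a}`; (c) `Ψ` is the unique `G_a`-orbit of
its length; (d) either (d1) conditions (b),(c) hold for all `G_a`-orbits on `Ω \ {a}`,
or (d2) for all `b ∈ Ψ`, `C_{Aut(G_a)}(G_{ab}) = 1`; and (e) `G_a` is not cyclic.
Then `C_{Aut(G)}(G_a) = 1`. -/
theorem aut_centralizing_point_stabilizer {G Ω : Type*} [Group G] [Finite G] [Finite Ω]
    [MulAction G Ω] (a : Ω)
    (hfp : IsFaithfulPrimitiveOn (⊤ : Subgroup G) (Set.univ : Set Ω))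
    (Ψ : Set Ω) (b : Ω) (hb : b ≠ a)
    (hΨ : Ψ = MulAction.orbit ↥(MulAction.stabilizer G a) b)
    (hΨfp : IsFaithfulPrimitiveOn (MulAction.stabilizer G a) Ψ)
    (huniq : ∀ c : Ω, c ≠ a →
      (MulAction.orbit ↥(MulAction.stabilizer G a) c).ncard = Ψ.ncard →
      MulAction.orbit ↥(MulAction.stabilizer G a) c = Ψ)
    (hd : (∀ c : Ω, c ≠ a →
            IsFaithfulPrimitiveOn (MulAction.stabilizer G a)
              (MulAction.orbit ↥(MulAction.stabilizer G a) c) ∧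
            (∀ c' : Ω, c' ≠ a →
              (MulAction.orbit ↥(MulAction.stabilizer G a) c').ncard =
                (MulAction.orbit ↥(MulAction.stabilizer G a) c).ncard →
              MulAction.orbit ↥(MulAction.stabilizer G a) c' =
                MulAction.orbit ↥(MulAction.stabilizer G a) c)) ∨
          (∀ c ∈ Ψ, ∀ φ : MulAut ↥(MulAction.stabilizer G a),
            (∀ g : ↥(MulAction.stabilizer G a),
              (g : G) ∈ MulAction.stabilizer G c → φ g = g) → φ = 1))
    (hcyc : ¬ IsCyclic ↥(MulAction.stabilizer G a)) :
    ∀ φ : MulAut G, (∀ g ∈ MulAction.stabilizer G a, φ g = g) → φ = 1 := by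
  classical
  intro φ hφ
  obtain ⟨hf1, hf2, hf3⟩ := hfp
  have htr : ∀ x : Ω, ∃ g : G, g • a = x := by
    intro x
    obtain ⟨g, -, hg⟩ := hf2 a trivial x trivial
    exact ⟨g, hg⟩
  choose t ht using htr
  obtain ⟨σ, hσdef⟩ : ∃ σ : Ω → Ω, ∀ x, σ x = φ (t x) • a := ⟨_, fun _ => rfl⟩
  have hσa : ∀ g : G, σ (g • a) = φ g • a := by
    intro g
    have hm : (t (g • a))⁻¹ * g ∈ MulAction.stabilizer G a := by
      rw [MulAction.mem_stabilizer_iff, mul_smul, inv_smul_eq_iff, ht]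
    have h1 := hφ _ hm
    have h2 : φ g = φ (t (g • a)) * ((t (g • a))⁻¹ * g) := by
      rw [← h1, ← map_mul, mul_inv_cancel_left]
    rw [hσdef, h2, mul_smul, MulAction.mem_stabilizer_iff.1 hm]
  have hσs : ∀ (g : G) (x : Ω), σ (g • x) = φ g • σ x := by
    intro g x
    obtain ⟨k, rfl⟩ : ∃ k : G, k • a = x := ⟨_, ht x⟩
    rw [← mul_smul, hσa, hσa, map_mul, mul_smul]
  have hσa' : σ a = a := by simpa using hσa 1
  have hσi : Function.Injective σ := by
    intro x y hxy
    obtain ⟨k, rfl⟩ : ∃ k : G, k • a = x := ⟨_, ht x⟩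
    obtain ⟨l, rfl⟩ : ∃ k : G, k • a = y := ⟨_, ht y⟩
    rw [hσa, hσa] at hxy
    have hm : φ (l⁻¹ * k) ∈ MulAction.stabilizer G a := by
      rw [MulAction.mem_stabilizer_iff, map_mul, map_inv, mul_smul, hxy, inv_smul_smul]
    have h1 := φ.injective (hφ _ hm)
    rw [h1, MulAction.mem_stabilizer_iff, mul_smul, inv_smul_eq_iff] at hm
    exact hm
  have hσc : ∀ h ∈ MulAction.stabilizer G a, ∀ x, σ (h • x) = h • σ x := by
    intro h hh x
    rw [hσs, hφ h hh]
  -- `σ` fixes pointwise every good suborbit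
  have key : ∀ c : Ω, c ≠ a →
      IsFaithfulPrimitiveOn (MulAction.stabilizer G a)
        (MulAction.orbit ↥(MulAction.stabilizer G a) c) →
      (∀ c' : Ω, c' ≠ a →
        (MulAction.orbit ↥(MulAction.stabilizer G a) c').ncard =
          (MulAction.orbit ↥(MulAction.stabilizer G a) c).ncard →
        MulAction.orbit ↥(MulAction.stabilizer G a) c' =
          MulAction.orbit ↥(MulAction.stabilizer G a) c) → σ c = c := by
    intro c hca hprim hun
    by_contra hne
    apply hcyc
    refine cyclic_of_commuting _ _ hprim ?_ σ hσi hσc c (MulAction.mem_orbit_self c) ?_ hne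
    · rintro h hh _ ⟨k, rfl⟩
      exact ⟨⟨h, hh⟩ * k, mul_smul _ _ _⟩
    · rw [← hun (σ c) ?_ ?_]
      · exact MulAction.mem_orbit_self _
      · intro h
        exact hca (hσi (h.trans hσa'.symm))
      · rw [← Set.ncard_image_of_injective (MulAction.orbit ↥(MulAction.stabilizer G a) c) hσi]
        congr 1
        ext y
        constructor
        · rintro ⟨k, rfl⟩
          exact ⟨k • c, ⟨k, rfl⟩, hσc k k.2 c⟩
        · rintro ⟨_, ⟨k, rfl⟩, rfl⟩
          exact ⟨k, (hσc k k.2 c).symm⟩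
  rcases hd with hd | hd
  · have hσ1 : ∀ x, σ x = x := by
      intro x
      by_cases hx : x = a
      · rw [hx, hσa']
      · exact key x hx (hd x hx).1 (hd x hx).2
    ext g
    have : g⁻¹ * φ g = 1 := by
      apply hf1 _ trivial
      intro x _
      have := hσs g x
      rw [hσ1, hσ1] at this
      rw [mul_smul, ← this, inv_smul_smul]
    rw [inv_mul_eq_one] at this
    exact this.symm
  · subst hΨ
    have hσb : σ b = b := key b hb hΨfp huniq
    obtain ⟨g, hga, hgb⟩ : ∃ g : G, g • a = b ∧ g • b = a := by
      obtain ⟨g, hg⟩ : ∃ k : G, k • a = b := ⟨_, ht b⟩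
      have hp := paired_ncard a g
      rw [hg] at hp
      have hc : g⁻¹ • a ≠ a := by
        intro h
        rw [inv_smul_eq_iff] at h
        exact hb (hg.symm.trans h.symm)
      have hbm : b ∈ MulAction.orbit ↥(MulAction.stabilizer G a) (g⁻¹ • a) := by
        rw [huniq _ hc hp]
        exact MulAction.mem_orbit_self b
      obtain ⟨⟨h, hh⟩, hhb⟩ := hbm
      have hhb' : h • g⁻¹ • a = b := hhb
      refine ⟨g * h⁻¹, ?_, ?_⟩
      · rw [mul_smul, inv_smul_eq_iff.2 (MulAction.mem_stabilizer_iff.1 hh).symm, hg]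
      · rw [mul_smul, ← hhb', inv_smul_smul, smul_inv_smul]
    have hginvb : g⁻¹ • b = a := by rw [inv_smul_eq_iff, hga]
    have hginva : g⁻¹ • a = b := by rw [inv_smul_eq_iff, hgb]
    let θ : G ≃* G := ((MulAut.conj g).trans φ).trans (MulAut.conj g⁻¹)
    have hθ : ∀ x, θ x = g⁻¹ * φ (g * x * g⁻¹) * g := by
      intro x
      simp [θ, MulAut.conj_apply]
    have hθm : ∀ x : ↥(MulAction.stabilizer G a), θ x ∈ MulAction.stabilizer G a := by
      intro x
      have h1 : φ (g * x * g⁻¹) • b = b := by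
        conv_lhs => rw [← hσb]
        rw [← hσs, mul_smul, mul_smul, hginvb, MulAction.mem_stabilizer_iff.1 x.2, hga, hσb]
      rw [hθ, MulAction.mem_stabilizer_iff, mul_smul, mul_smul, hga, h1, hginvb]
    let ψ₀ : ↥(MulAction.stabilizer G a) →* ↥(MulAction.stabilizer G a) :=
      (θ.toMonoidHom.comp (MulAction.stabilizer G a).subtype).codRestrict _ hθm
    have hψ₀ : ∀ x, ((ψ₀ x : ↥(MulAction.stabilizer G a)) : G) = θ x := fun _ => rfl
    have hψi : Function.Injective ψ₀ := by
      intro x y hxy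
      have := congrArg Subtype.val hxy
      rw [hψ₀, hψ₀] at this
      exact Subtype.ext (θ.injective this)
    let ψ : MulAut ↥(MulAction.stabilizer G a) :=
      MulEquiv.ofBijective ψ₀ (Finite.injective_iff_bijective.1 hψi)
    have hψ1 : ψ = 1 := by
      apply hd b (MulAction.mem_orbit_self b)
      intro x hx
      apply Subtype.ext
      change θ x = x
      rw [hθ, hφ]
      · group
      · rw [MulAction.mem_stabilizer_iff, mul_smul, mul_smul, hginva,
          MulAction.mem_stabilizer_iff.1 hx, hgb]
    have hfix : ∀ x ∈ MulAction.stabilizer G a, φ (g * x * g⁻¹) = g * x * g⁻¹ := by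
      intro x hx
      have h0 : ψ ⟨x, hx⟩ = ⟨x, hx⟩ := by rw [hψ1]; rfl
      have h1 : θ x = x := congrArg Subtype.val h0
      rw [hθ] at h1
      calc φ (g * x * g⁻¹) = g * (g⁻¹ * φ (g * x * g⁻¹) * g) * g⁻¹ := by group
        _ = _ := by rw [h1]
    let K : Subgroup G := φ.toMonoidHom.eqLocus (MonoidHom.id G)
    have hK : ∀ x, x ∈ K ↔ φ x = x := fun _ => Iff.rfl
    have hHK : MulAction.stabilizer G a ≤ K := fun x hx => (hK x).2 (hφ x hx)
    have hmem : ∀ k l x : G, k ∈ K → l ∈ K → x • k • a = l • a → x ∈ K := by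
      intro k l x hk hl h
      have h1 : l⁻¹ * (x * k) ∈ K := by
        apply hHK
        rw [MulAction.mem_stabilizer_iff, mul_smul, mul_smul, h, inv_smul_smul]
      have h2 : x = l * (l⁻¹ * (x * k)) * k⁻¹ := by group
      rw [h2]
      exact K.mul_mem (K.mul_mem hl h1) (K.inv_mem hk)
    let B : Set Ω := {y | ∃ k ∈ K, k • a = y}
    have hBblock := block_of_stable ⊤ B (by
      rintro x - w ⟨k, hk, rfl⟩ ⟨l, hl, hlw⟩ y ⟨m, hm, rfl⟩
      exact ⟨x * m, K.mul_mem (hmem k l x hk hl hlw.symm) hm, mul_smul _ _ _⟩)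
    rcases hf3 B (Set.subset_univ _) hBblock with hB | hB
    · exfalso
      apply hcyc
      have hfb : ∀ x ∈ MulAction.stabilizer G a, x • b = b := by
        intro x hx
        have h1 : (g * x * g⁻¹) • a = a :=
          hB ⟨_, (hK _).2 (hfix x hx), rfl⟩ ⟨1, K.one_mem, one_smul _ _⟩
        rw [mul_smul, mul_smul, hginva] at h1
        exact MulAction.injective g (h1.trans hgb.symm)
      have htriv : ∀ x ∈ MulAction.stabilizer G a, x = 1 := by
        intro x hx
        apply hΨfp.1 x hx
        rintro _ ⟨k, rfl⟩
        change x • (k : G) • b = (k : G) • b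
        rw [hfb k k.2, hfb x hx]
      have : Subsingleton ↥(MulAction.stabilizer G a) :=
        ⟨fun u v => Subtype.ext ((htriv u u.2).trans (htriv v v.2).symm)⟩
      infer_instance
    · ext x
      have hx : x • a ∈ B := by rw [hB]; trivial
      obtain ⟨k, hk, hkx⟩ := hx
      exact (hK x).1 (hmem 1 k x K.one_mem hk (by rw [one_smul, hkx]))
end
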